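/- Let E be a unital idempotent CPTP map on d×d complex matrices and let ρ be a positive definite density matrix. Then the infimum over positive definite density matrices σ with E(σ) = σ of the quantum relative entropy S(ρ‖σ) = Tr(ρ log ρ) − Tr(ρ log σ) equals S(E(ρ)) − S(ρ) = Tr(ρ log ρ) − Tr(E(ρ) log E(ρ)), and it is attained at σ = E(ρ). -/

import Mathlib

/-!
The Kraus operators of a unital channel `E` commute with every fixed point `σ` of `E`, hence with
`log σ`, and therefore `Tr (E(ρ) log σ) = Tr (ρ log σ)`. When `E(ρ)` is itself a fixed point, this
gives the Pythagorean identity `S(ρ‖σ) = S(ρ‖E(ρ)) + S(E(ρ)‖σ)`, whose last term is nonnegative by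
Klein's inequality and vanishes at `σ = E(ρ)`.
-/

open Matrix
open scoped ComplexOrder

/-- Matrix power `A ^ t` for real `t`, via the continuous functional calculus
(applying `x ↦ x ^ t` to the eigenvalues of a Hermitian matrix `A`). -/
noncomputable def mpow {d : ℕ} (A : Matrix (Fin d) (Fin d) ℂ) (t : ℝ) :
    Matrix (Fin d) (Fin d) ℂ :=
  cfc (fun x : ℝ => x ^ t) A

/-- The Tsallis-based relative entropy
`S̃_a(ρ|σ) = ((Tr (ρ^a σ^(1-a)))^(1/a) - 1) / (a - 1)`. -/
noncomputable def tsallis {d : ℕ} (a : ℝ) (ρ σ : Matrix (Fin d) (Fin d) ℂ) : ℝ :=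
  ((((mpow ρ a * mpow σ (1 - a)).trace).re) ^ (1 / a) - 1) / (a - 1)

/-- Matrix logarithm via the functional calculus. -/
noncomputable def mlog {d : ℕ} (A : Matrix (Fin d) (Fin d) ℂ) :
    Matrix (Fin d) (Fin d) ℂ :=
  cfc Real.log A

/-- The quantum relative entropy `S(ρ‖σ) = Tr(ρ log ρ) - Tr(ρ log σ)`. -/
noncomputable def relEnt {d : ℕ} (ρ σ : Matrix (Fin d) (Fin d) ℂ) : ℝ :=
  ((ρ * mlog ρ).trace).re - ((ρ * mlog σ).trace).re

section KrausMap

variable {ι m n R : Type*} [Fintype ι] [Fintype n]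

/-- The completely positive map `X ↦ ∑ i, K i * X * (K i)ᴴ` with Kraus operators `K`. The adjoint
operators `fun i => (K i)ᴴ` give its dual with respect to the trace pairing. -/
def krausMap [CommSemiring R] [StarRing R] (K : ι → Matrix m n R) :
    Matrix n n R →ₗ[R] Matrix m m R where
  toFun X := ∑ i, K i * X * (K i)ᴴ
  map_add' X Y := by simp only [Matrix.mul_add, Matrix.add_mul, Finset.sum_add_distrib]
  map_smul' c X := by
    simp only [Matrix.mul_smul, Matrix.smul_mul, Finset.smul_sum, RingHom.id_apply]

section CommSemiring

variable [CommSemiring R] [StarRing R]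

theorem krausMap_apply (K : ι → Matrix m n R) (X : Matrix n n R) :
    krausMap K X = ∑ i, K i * X * (K i)ᴴ := rfl

theorem krausMap_one [DecidableEq n] (K : ι → Matrix m n R) :
    krausMap K 1 = ∑ i, K i * (K i)ᴴ := by
  simp only [krausMap_apply, Matrix.mul_one]

theorem conjTranspose_krausMap (K : ι → Matrix m n R) (X : Matrix n n R) :
    (krausMap K X)ᴴ = krausMap K Xᴴ := by
  simp only [krausMap_apply, conjTranspose_sum, conjTranspose_mul, conjTranspose_conjTranspose,
    Matrix.mul_assoc]

theorem trace_krausMap_mul [Fintype m] (K : ι → Matrix m n R) (X : Matrix n n R)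
    (Y : Matrix m m R) :
    (krausMap K X * Y).trace = (X * krausMap (fun i => (K i)ᴴ) Y).trace := by
  simp only [krausMap_apply, Finset.sum_mul, Finset.mul_sum, trace_sum, conjTranspose_conjTranspose]
  refine Finset.sum_congr rfl fun i _ => ?_
  rw [Matrix.mul_assoc, Matrix.mul_assoc, trace_mul_comm]
  simp only [Matrix.mul_assoc]

theorem trace_krausMap [Fintype m] [DecidableEq n] {K : ι → Matrix m n R}
    (hTP : ∑ i, (K i)ᴴ * K i = 1) (X : Matrix n n R) : (krausMap K X).trace = X.trace := by
  classical
  simpa only [krausMap_one, conjTranspose_conjTranspose, hTP, Matrix.mul_one] using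
    trace_krausMap_mul K X 1

theorem krausMap_eq_krausMap_one_mul [DecidableEq n] {K : ι → Matrix n n R} {X : Matrix n n R}
    (hX : ∀ i, Commute X (K i)ᴴ) : krausMap K X = krausMap K 1 * X := by
  rw [krausMap_one, krausMap_apply, Finset.sum_mul]
  exact Finset.sum_congr rfl fun i _ => by
    rw [Matrix.mul_assoc, (hX i).eq, Matrix.mul_assoc]

end CommSemiring

theorem sum_lie_mul_conjTranspose_lie [CommRing R] [StarRing R] [DecidableEq n]
    (K : ι → Matrix n n R) (X : Matrix n n R) :
    ∑ i, ⁅K i, X⁆ * ⁅K i, X⁆ᴴ =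
      krausMap K (X * Xᴴ) - krausMap K X * Xᴴ - X * krausMap K Xᴴ + X * krausMap K 1 * Xᴴ := by
  simp only [krausMap_apply, Finset.sum_mul, Finset.mul_sum, ← Finset.sum_sub_distrib,
    ← Finset.sum_add_distrib]
  refine Finset.sum_congr rfl fun i _ => ?_
  rw [Ring.lie_def, conjTranspose_sub, conjTranspose_mul, conjTranspose_mul]
  noncomm_ring

variable {𝕜 : Type*} [RCLike 𝕜]

theorem posDef_krausMap [Finite m] [DecidableEq n] {K : ι → Matrix m n 𝕜}
    (hK : (krausMap K 1).PosDef) {X : Matrix n n 𝕜} (hX : X.PosDef) : (krausMap K X).PosDef := by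
  cases nonempty_fintype m
  have hterm (i : ι) : (K i * X * (K i)ᴴ).PosSemidef :=
    hX.posSemidef.mul_mul_conjTranspose_same (K i)
  refine PosDef.of_dotProduct_mulVec_pos (posSemidef_sum _ fun i _ => hterm i).isHermitian
    fun v hv => ?_
  obtain ⟨i, hi⟩ : ∃ i, (K i)ᴴ *ᵥ v ≠ 0 := by
    by_contra! hker
    have hpos := hK.dotProduct_mulVec_pos hv
    simp only [krausMap_one, sum_mulVec, ← mulVec_mulVec, hker, mulVec_zero,
      Finset.sum_const_zero, dotProduct_zero, lt_self_iff_false] at hpos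
  have hpos : 0 < star v ⬝ᵥ (K i * X * (K i)ᴴ) *ᵥ v := by
    simpa only [star_mulVec, conjTranspose_conjTranspose, ← dotProduct_mulVec, mulVec_mulVec,
      Matrix.mul_assoc] using hX.dotProduct_mulVec_pos hi
  rw [krausMap_apply, sum_mulVec, dotProduct_sum]
  exact Finset.sum_pos' (fun j _ => (hterm j).dotProduct_mulVec_nonneg v)
    ⟨i, Finset.mem_univ i, hpos⟩

variable [DecidableEq n] {K : ι → Matrix n n 𝕜}

theorem commute_kraus_of_krausMap_eq_self (hTP : ∑ i, (K i)ᴴ * K i = 1)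
    (hUnital : krausMap K 1 = 1) {X : Matrix n n 𝕜} (hX : krausMap K X = X) (i : ι) :
    Commute (K i) X := by
  have hX' : krausMap K Xᴴ = Xᴴ := by rw [← conjTranspose_krausMap, hX]
  have hsum : ∑ i, (⁅K i, X⁆ * ⁅K i, X⁆ᴴ).trace = 0 := by
    rw [← trace_sum, sum_lie_mul_conjTranspose_lie, hX, hX', hUnital, Matrix.mul_one,
      sub_add_cancel, trace_sub, trace_krausMap hTP, sub_self]
  have hzero : (⁅K i, X⁆ * ⁅K i, X⁆ᴴ).trace = 0 :=
    (Finset.sum_eq_zero_iff_of_nonneg fun j _ =>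
      (posSemidef_self_mul_conjTranspose ⁅K j, X⁆).trace_nonneg).1 hsum i (Finset.mem_univ i)
  exact commute_iff_lie_eq.2 (trace_mul_conjTranspose_self_eq_zero_iff.1 hzero)

theorem trace_krausMap_mul_cfc (hTP : ∑ i, (K i)ᴴ * K i = 1) (hUnital : krausMap K 1 = 1)
    {σ : Matrix n n 𝕜} (hσ : krausMap K σ = σ) (f : ℝ → ℝ) (X : Matrix n n 𝕜) :
    (krausMap K X * cfc f σ).trace = (X * cfc f σ).trace := by
  have hcomm (i : ι) : Commute (cfc f σ) (K i) :=
    (commute_kraus_of_krausMap_eq_self hTP hUnital hσ i).symm.cfc_real f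
  have hdual : krausMap (fun i => (K i)ᴴ) (cfc f σ) = cfc f σ := by
    rw [krausMap_eq_krausMap_one_mul (by simpa only [conjTranspose_conjTranspose] using hcomm),
      krausMap_one]
    simp only [conjTranspose_conjTranspose, hTP, Matrix.one_mul]
  rw [trace_krausMap_mul, hdual]

end KrausMap

section Klein

variable {n 𝕜 : Type*} [Fintype n] [DecidableEq n] [RCLike 𝕜] {A B : Matrix n n 𝕜}

/-- The transition probabilities `|⟨uᵢ, vⱼ⟩|²` between the eigenbases `u` of `A` and `v` of `B`
chosen by Mathlib's spectral theorem. -/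
noncomputable def eigenbasisOverlap (hA : A.IsHermitian) (hB : B.IsHermitian) (i j : n) : ℝ :=
  ‖((hA.eigenvectorUnitary : Matrix n n 𝕜)ᴴ * (hB.eigenvectorUnitary : Matrix n n 𝕜)) i j‖ ^ 2

theorem eigenbasisOverlap_nonneg (hA : A.IsHermitian) (hB : B.IsHermitian) (i j : n) :
    0 ≤ eigenbasisOverlap hA hB i j :=
  sq_nonneg _

theorem trace_cfc_mul_cfc (hA : A.IsHermitian) (hB : B.IsHermitian) (f g : ℝ → ℝ) :
    (cfc f A * cfc g B).trace =
      ((∑ i, ∑ j, f (hA.eigenvalues i) * g (hB.eigenvalues j) * eigenbasisOverlap hA hB i j : ℝ) :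
        𝕜) := by
  set U : Matrix n n 𝕜 := ↑hA.eigenvectorUnitary with hU
  set V : Matrix n n 𝕜 := ↑hB.eigenvectorUnitary with hV
  set a : Matrix n n 𝕜 := diagonal (RCLike.ofReal ∘ f ∘ hA.eigenvalues) with ha
  set b : Matrix n n 𝕜 := diagonal (RCLike.ofReal ∘ g ∘ hB.eigenvalues) with hb
  have hcyc : (U * a * Uᴴ * (V * b * Vᴴ)).trace = (a * (Uᴴ * V) * (b * (Uᴴ * V)ᴴ)).trace := by
    rw [Matrix.mul_assoc, Matrix.mul_assoc, trace_mul_comm, conjTranspose_mul,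
      conjTranspose_conjTranspose]
    simp only [Matrix.mul_assoc]
  rw [hA.cfc_eq, hB.cfc_eq, IsHermitian.cfc, IsHermitian.cfc, Unitary.conjStarAlgAut_apply,
    Unitary.conjStarAlgAut_apply, star_eq_conjTranspose, star_eq_conjTranspose, ← hU, ← hV, hcyc,
    trace]
  push_cast
  refine Finset.sum_congr rfl fun i _ => ?_
  rw [diag_apply, Matrix.mul_apply]
  refine Finset.sum_congr rfl fun j _ => ?_
  rw [ha, hb, diagonal_mul, diagonal_mul, conjTranspose_apply, eigenbasisOverlap, ← hU, ← hV]
  push_cast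
  rw [← RCLike.mul_conj]
  simp only [Function.comp_apply, RCLike.star_def]
  ring

theorem sum_re_trace_cfc_mul_cfc_nonneg {κ : Type*} [Fintype κ] (hA : A.IsHermitian)
    (hB : B.IsHermitian) (f g : κ → ℝ → ℝ)
    (hfg : ∀ i j, 0 ≤ ∑ k, f k (hA.eigenvalues i) * g k (hB.eigenvalues j)) :
    0 ≤ ∑ k, RCLike.re (cfc (f k) A * cfc (g k) B).trace := by
  simp only [trace_cfc_mul_cfc hA hB, RCLike.ofReal_re]
  rw [Finset.sum_comm]
  refine Finset.sum_nonneg fun i _ => ?_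
  rw [Finset.sum_comm]
  refine Finset.sum_nonneg fun j _ => ?_
  rw [← Finset.sum_mul]
  exact mul_nonneg (hfg i j) (eigenbasisOverlap_nonneg hA hB i j)

theorem sub_le_mul_log_sub_mul_log {x y : ℝ} (hx : 0 ≤ x) (hy : 0 < y) :
    x - y ≤ x * Real.log x - x * Real.log y := by
  rcases hx.eq_or_lt with rfl | hx
  · simpa using hy.le
  have hlog : x * Real.log (y / x) ≤ x * (y / x - 1) :=
    mul_le_mul_of_nonneg_left (Real.log_le_sub_one_of_pos (div_pos hy hx)) hx.le
  rw [Real.log_div hy.ne' hx.ne', mul_sub, mul_sub, mul_div_cancel₀ y hx.ne', mul_one] at hlog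
  linarith

/-- The quantum relative entropy `S(ρ‖σ) = Tr (ρ log ρ) - Tr (ρ log σ)`, extending `relEnt` to
arbitrary finite index types and to real matrices. Since `Real.log 0 = 0`, the value is the usual
one only when the kernel of `σ` is contained in that of `ρ`. -/
noncomputable def relativeEntropy (ρ σ : Matrix n n 𝕜) : ℝ :=
  RCLike.re (ρ * cfc Real.log ρ).trace - RCLike.re (ρ * cfc Real.log σ).trace

theorem re_trace_sub_re_trace_le_relativeEntropy (hA : A.PosSemidef) (hB : B.PosDef) :
    RCLike.re A.trace - RCLike.re B.trace ≤ relativeEntropy A B := by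
  have hcont (f : ℝ → ℝ) : ContinuousOn f (spectrum ℝ A) := A.finite_real_spectrum.continuousOn f
  have hA_id : cfc (fun x : ℝ => x) A = A := cfc_id' ℝ A hA.isHermitian
  have hA_neg : cfc (fun x : ℝ => -x) A = -A := by rw [cfc_neg (fun x => x), hA_id]
  have hB_id : cfc (fun y : ℝ => y) B = B := cfc_id' ℝ B hB.isHermitian
  have hA_one : cfc (fun _ : ℝ => (1 : ℝ)) A = 1 := cfc_const_one ℝ A hA.isHermitian
  have hB_one : cfc (fun _ : ℝ => (1 : ℝ)) B = 1 := cfc_const_one ℝ B hB.isHermitian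
  have hA_log : cfc (fun x => x * Real.log x) A = A * cfc Real.log A := by
    rw [cfc_mul (fun x => x) Real.log A (hcont _) (hcont _), hA_id]
  have hklein := sum_re_trace_cfc_mul_cfc_nonneg hA.isHermitian hB.isHermitian
    ![fun x => x * Real.log x, fun x => -x, fun x => -x, fun _ => 1]
    ![fun _ => 1, Real.log, fun _ => 1, fun y => y] fun i j => by
      simp only [Fin.sum_univ_four, cons_val, neg_mul, one_mul, mul_one]
      linarith [sub_le_mul_log_sub_mul_log (hA.eigenvalues_nonneg i) (hB.eigenvalues_pos j)]
  simp only [Fin.sum_univ_four, cons_val, hA_log, hA_neg, hA_one, hB_id, hB_one, neg_mul, one_mul,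
    mul_one, trace_neg, map_neg] at hklein
  rw [relativeEntropy]
  linarith

end Klein

section FixedPoints

variable {ι n 𝕜 : Type*} [Fintype ι] [Fintype n] [DecidableEq n] [RCLike 𝕜]
  {K : ι → Matrix n n 𝕜}

theorem relativeEntropy_krausMap_right (hTP : ∑ i, (K i)ᴴ * K i = 1) (hUnital : krausMap K 1 = 1)
    {ρ : Matrix n n 𝕜} (hfix : krausMap K (krausMap K ρ) = krausMap K ρ) :
    relativeEntropy ρ (krausMap K ρ) = RCLike.re (ρ * cfc Real.log ρ).trace -
      RCLike.re (krausMap K ρ * cfc Real.log (krausMap K ρ)).trace := by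
  rw [relativeEntropy, trace_krausMap_mul_cfc hTP hUnital hfix]

theorem relativeEntropy_eq_add_of_krausMap_eq_self (hTP : ∑ i, (K i)ᴴ * K i = 1)
    (hUnital : krausMap K 1 = 1) {ρ σ : Matrix n n 𝕜}
    (hfix : krausMap K (krausMap K ρ) = krausMap K ρ) (hσ : krausMap K σ = σ) :
    relativeEntropy ρ σ =
      relativeEntropy ρ (krausMap K ρ) + relativeEntropy (krausMap K ρ) σ := by
  rw [relativeEntropy_krausMap_right hTP hUnital hfix, relativeEntropy, relativeEntropy,
    trace_krausMap_mul_cfc hTP hUnital hσ, sub_add_sub_cancel]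

theorem isLeast_relativeEntropy_krausMap (hTP : ∑ i, (K i)ᴴ * K i = 1)
    (hUnital : krausMap K 1 = 1) {ρ : Matrix n n 𝕜} (hKρ : (krausMap K ρ).PosDef)
    (hfix : krausMap K (krausMap K ρ) = krausMap K ρ) :
    IsLeast (relativeEntropy ρ '' {σ | σ.PosDef ∧ σ.trace = ρ.trace ∧ krausMap K σ = σ})
      (relativeEntropy ρ (krausMap K ρ)) := by
  refine ⟨Set.mem_image_of_mem _ ⟨hKρ, trace_krausMap hTP ρ, hfix⟩, ?_⟩
  rintro _ ⟨σ, ⟨hσ, hσtr, hσfix⟩, rfl⟩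
  have hklein := re_trace_sub_re_trace_le_relativeEntropy hKρ.posSemidef hσ
  rw [trace_krausMap hTP, hσtr, sub_self] at hklein
  rw [relativeEntropy_eq_add_of_krausMap_eq_self hTP hUnital hfix hσfix]
  exact le_add_of_nonneg_right hklein

theorem stmt_14_general (hTP : ∑ i, (K i)ᴴ * K i = 1) (hUnital : krausMap K 1 = 1)
    {ρ : Matrix n n 𝕜} (_hρ : ρ.PosSemidef) (hKρ : (krausMap K ρ).PosDef)
    (hfix : krausMap K (krausMap K ρ) = krausMap K ρ) :
    (⨅ σ : {σ : Matrix n n 𝕜 // σ.PosDef ∧ σ.trace = ρ.trace ∧ krausMap K σ = σ},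
        relativeEntropy ρ (σ : Matrix n n 𝕜))
      = RCLike.re (ρ * cfc Real.log ρ).trace -
        RCLike.re (krausMap K ρ * cfc Real.log (krausMap K ρ)).trace ∧
    (krausMap K ρ).trace = ρ.trace ∧
    relativeEntropy ρ (krausMap K ρ) = RCLike.re (ρ * cfc Real.log ρ).trace -
      RCLike.re (krausMap K ρ * cfc Real.log (krausMap K ρ)).trace := by
  have hval := relativeEntropy_krausMap_right hTP hUnital hfix
  refine ⟨?_, trace_krausMap hTP ρ, hval⟩
  rw [← hval, ← (isLeast_relativeEntropy_krausMap hTP hUnital hKρ hfix).csInf_eq]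
  exact sInf_image'.symm

end FixedPoints

/-- For a unital idempotent CPTP map `E` and a positive definite density matrix `ρ`,
the infimum of the relative entropy `S(ρ‖σ)` over positive definite density matrices
`σ` fixed by `E` equals `S(E(ρ)) - S(ρ) = Tr(ρ log ρ) - Tr(E(ρ) log E(ρ))`, and it is
attained at `σ = E(ρ)`. -/
theorem stmt_14 {d : ℕ}
    (E : Matrix (Fin d) (Fin d) ℂ →ₗ[ℂ] Matrix (Fin d) (Fin d) ℂ)
    (hKraus : ∃ (n : ℕ) (K : Fin n → Matrix (Fin d) (Fin d) ℂ),
      (∀ X, E X = ∑ i, K i * X * (K i)ᴴ) ∧ ∑ i, (K i)ᴴ * K i = 1)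
    (hUnital : E 1 = 1)
    (hIdem : ∀ X, E (E X) = E X)
    (ρ : Matrix (Fin d) (Fin d) ℂ) (hρ : ρ.PosDef) (hρtr : ρ.trace = 1) :
    (⨅ σ : {σ : Matrix (Fin d) (Fin d) ℂ // σ.PosDef ∧ σ.trace = 1 ∧ E σ = σ},
        relEnt ρ (σ : Matrix (Fin d) (Fin d) ℂ))
      = ((ρ * mlog ρ).trace).re - ((E ρ * mlog (E ρ)).trace).re ∧
    (E ρ).PosDef ∧ (E ρ).trace = 1 ∧ E (E ρ) = E ρ ∧
    relEnt ρ (E ρ) = ((ρ * mlog ρ).trace).re - ((E ρ * mlog (E ρ)).trace).re := by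
  obtain ⟨m, K, hK, hTP⟩ := hKraus
  obtain rfl : E = krausMap K := LinearMap.ext hK
  have hKρ : (krausMap K ρ).PosDef := posDef_krausMap (by rw [hUnital]; exact PosDef.one) hρ
  have h := stmt_14_general hTP hUnital hρ.posSemidef hKρ (hIdem ρ)
  rw [hρtr] at h
  exact ⟨h.1, hKρ, h.2.1, hIdem ρ, h.2.2⟩
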